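/- Let u, v, h be real numbers with u, v ≥ 0 and h ≥ 1. Then every real number x ≥ 1 satisfying x = u + v·(log x)^h satisfies x < max{2^h·(u^{1/h} + v^{1/h}·log(h^h·v))^h, 2^h·(u^{1/h} + 2e²)^h}. -/

import Mathlib

lemma pdw_aux (U c y : ℝ) (hc : 0 < c) (hy : 0 < y) (h : y ≤ U + c * Real.log y) :
    y < 2 * (U + c * Real.log c) := by
  have h1 : Real.log (y / (2 * c)) ≤ y / (2 * c) - 1 :=
    Real.log_le_sub_one_of_pos (by positivity)
  rw [Real.log_div hy.ne' (by positivity), Real.log_mul two_ne_zero hc.ne'] at h1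
  have h2 : Real.log 2 < 1 := by linarith [Real.log_two_lt_d9]
  have h3 : c * Real.log y ≤ c * (Real.log 2 + Real.log c - 1) + y / 2 := by
    have : c * (y / (2 * c)) = y / 2 := by field_simp
    nlinarith
  nlinarith [mul_pos hc (sub_pos.2 h2)]

lemma pdw_fin (x h B : ℝ) (hh : 1 ≤ h) (hx : 1 ≤ x) (hB : x ^ (1 / h) < 2 * B) :
    x < (2 : ℝ) ^ h * B ^ h := by
  have hx0 : 0 ≤ x := by linarith
  have hp : 0 ≤ x ^ (1 / h) := Real.rpow_nonneg hx0 _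
  have hB0 : 0 ≤ B := by linarith
  rw [← Real.mul_rpow (by norm_num) hB0]
  calc x = (x ^ (1 / h)) ^ h := by
        rw [← Real.rpow_mul hx0, one_div_mul_cancel (by linarith), Real.rpow_one]
    _ < _ := Real.rpow_lt_rpow hp hB (by linarith)

/-- Pethő–de Weger: if `u, v ≥ 0`, `h ≥ 1` and `x ≥ 1` satisfies
`x = u + v·(log x)^h`, then
`x < max {2^h·(u^{1/h} + v^{1/h}·log(h^h·v))^h, 2^h·(u^{1/h} + 2e²)^h}`. -/
theorem petho_de_weger (u v h : ℝ) (hu : 0 ≤ u) (hv : 0 ≤ v) (hh : 1 ≤ h)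
    (x : ℝ) (hx : 1 ≤ x) (heq : x = u + v * (Real.log x) ^ h) :
    x < max ((2 : ℝ) ^ h * (u ^ (1 / h) + v ^ (1 / h) * Real.log (h ^ h * v)) ^ h)
            ((2 : ℝ) ^ h * (u ^ (1 / h) + 2 * Real.exp 2) ^ h) := by
  have h0 : 0 < h := by linarith
  have hx0 : 0 < x := by linarith
  have hl : 0 ≤ Real.log x := Real.log_nonneg hx
  have hy : 0 < x ^ (1 / h) := Real.rpow_pos_of_pos hx0 _
  have hly : Real.log x = h * Real.log (x ^ (1 / h)) := by
    rw [Real.log_rpow hx0]; field_simp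
  have hly0 : 0 ≤ Real.log (x ^ (1 / h)) := by
    rw [Real.log_rpow hx0]; positivity
  have hw : 0 ≤ v ^ (1 / h) := Real.rpow_nonneg hv _
  have key : x ^ (1 / h) ≤ u ^ (1 / h) + (h * v ^ (1 / h)) * Real.log (x ^ (1 / h)) := by
    calc x ^ (1 / h) = (u + v * (Real.log x) ^ h) ^ (1 / h) := by rw [← heq]
      _ ≤ u ^ (1 / h) + (v * (Real.log x) ^ h) ^ (1 / h) :=
        Real.rpow_add_le_add_rpow hu (mul_nonneg hv (Real.rpow_nonneg hl _)) (by positivity)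
          (by rw [div_le_one h0]; exact hh)
      _ = u ^ (1 / h) + v ^ (1 / h) * Real.log x := by
        rw [Real.mul_rpow hv (Real.rpow_nonneg hl _), ← Real.rpow_mul hl,
          mul_one_div_cancel h0.ne', Real.rpow_one]
      _ = _ := by rw [hly]; ring_nf
  rcases le_total (h * v ^ (1 / h)) (Real.exp 2) with hc | hc
  · apply lt_max_of_lt_right
    apply pdw_fin _ _ _ hh hx
    have := pdw_aux (u ^ (1 / h)) (Real.exp 2) _ (Real.exp_pos 2) hy
      (key.trans (by gcongr))
    rw [Real.log_exp] at this
    linarith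
  · apply lt_max_of_lt_left
    apply pdw_fin _ _ _ hh hx
    have hcp : 0 < h * v ^ (1 / h) := (Real.exp_pos 2).trans_le hc
    have hvp : 0 < v := by
      rcases hv.eq_or_lt with h1 | h1
      · rw [← h1, Real.zero_rpow (by positivity)] at hcp
        simp at hcp
      · exact h1
    have := pdw_aux (u ^ (1 / h)) _ _ hcp hy key
    have e : v ^ (1 / h) * Real.log (h ^ h * v)
        = h * v ^ (1 / h) * Real.log (h * v ^ (1 / h)) := by
      rw [Real.log_mul (by positivity) hvp.ne', Real.log_mul h0.ne' (by positivity),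
        Real.log_rpow h0, Real.log_rpow hvp]
      field_simp
    rw [e]
    exact this
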